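/- arXiv:2405.02272 — 4 statements merged into one kernel-verified Lean document; each statement's English description precedes it below -/
import Mathlib

section
/- For every integer k ≥ 0, the weak cone Morse inequality holds: b^φ_k ≤ m_k − v_{k−ℓ} + m_{k−ℓ+1} − v_{k−ℓ+1}. -/
open LinearMap Module

noncomputable section

namespace ConeMorse

variable (A : ℤ → Type) [∀ i, AddCommGroup (A i)] [∀ i, Module ℝ (A i)]

/-- Transport along an equality of indices. -/
def lcast {m k : ℤ} (h : m = k) : A m →ₗ[ℝ] A k where
  toFun x := h ▸ x
  map_add' x y := by subst h; rfl
  map_smul' c x := by subst h; rfl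

variable (d : ∀ i, A i →ₗ[ℝ] A (i + 1))

/-- Cocycles in degree `i`. -/
def cocycles (i : ℤ) : Submodule ℝ (A i) := ker (d i)

/-- Coboundaries in degree `i`: the image of `d : A^{i-1} → A^i`. -/
def cobound (i : ℤ) : Submodule ℝ (A i) :=
  range ((lcast A (show i - 1 + 1 = i by ring)).comp (d (i - 1)))

/-- Cohomology in degree `i`: cocycles modulo coboundaries. -/
abbrev Hcoh (i : ℤ) :=
  cocycles A d i ⧸ Submodule.comap (cocycles A d i).subtype (cobound A d i)

section OneComplex

variable (ℓ : ℤ) (φ : ∀ i, A i →ₗ[ℝ] A (i + ℓ))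

/-- The cone differential `∂_C (a, b) = (∂ a + φ b, (−1)^{ℓ−1} ∂ b)` on
`Cone^i(φ) = A^i ⊕ A^{i−ℓ+1}`. -/
def coneD (i : ℤ) : (A i × A (i - ℓ + 1)) →ₗ[ℝ] (A (i + 1) × A (i + 1 - ℓ + 1)) :=
  LinearMap.prod
    ((d i).comp (LinearMap.fst ℝ (A i) (A (i - ℓ + 1))) +
      (lcast A (show i - ℓ + 1 + ℓ = i + 1 by ring)).comp
        ((φ (i - ℓ + 1)).comp (LinearMap.snd ℝ (A i) (A (i - ℓ + 1)))))
    (((-1 : ℝ) ^ (ℓ - 1)) •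
      ((lcast A (show i - ℓ + 1 + 1 = i + 1 - ℓ + 1 by ring)).comp
        ((d (i - ℓ + 1)).comp (LinearMap.snd ℝ (A i) (A (i - ℓ + 1))))))

variable [∀ i, FiniteDimensional ℝ (A i)]

/-- `m_k`: the dimension of the cochain group in degree `k`. -/
def mnum (k : ℤ) : ℕ := finrank ℝ (A k)

/-- `b_k`: the dimension of the cohomology in degree `k`. -/
def bnum (k : ℤ) : ℕ := finrank ℝ (Hcoh A d k)

/-- `v_k`: the rank of `φ : A^k → A^{k+ℓ}`. -/
def vnum (k : ℤ) : ℕ := finrank ℝ (range (φ k))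

/-- `r_k`: the rank of the induced map `[φ] : H^k → H^{k+ℓ}`, computed as the dimension of
`φ(Z^k)/(φ(Z^k) ∩ B^{k+ℓ})`. -/
def rnum (k : ℤ) : ℕ :=
  finrank ℝ ((Submodule.map (φ k) (cocycles A d k)) ⧸
    Submodule.comap (Submodule.map (φ k) (cocycles A d k)).subtype (cobound A d (k + ℓ)))

/-- `b^φ_k`: the dimension of the cone cohomology in degree `k`. -/
def bphi (k : ℤ) : ℕ :=
  finrank ℝ (Hcoh (fun i => A i × A (i - ℓ + 1)) (coneD A d ℓ φ) k)

end OneComplex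

end ConeMorse

open ConeMorse

namespace ConeMorse

section Helpers

theorem lcast_rfl (A : ℤ → Type) [∀ i, AddCommGroup (A i)] [∀ i, Module ℝ (A i)]
    {m : ℤ} (h : m = m) (x : A m) : lcast A h x = x := rfl

theorem lcast_lcast (A : ℤ → Type) [∀ i, AddCommGroup (A i)] [∀ i, Module ℝ (A i)]
    {m k j : ℤ} (h : m = k) (h' : k = j) (x : A m) :
    lcast A h' (lcast A h x) = lcast A (h.trans h') x := by
  subst h; subst h'; rfl

theorem lcast_inj (A : ℤ → Type) [∀ i, AddCommGroup (A i)] [∀ i, Module ℝ (A i)]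
    {m k : ℤ} (h : m = k) : Function.Injective (lcast A h) := by
  subst h; intro x y hxy; exact hxy

theorem map_lcast (A : ℤ → Type) [∀ i, AddCommGroup (A i)] [∀ i, Module ℝ (A i)]
    (ℓ : ℤ) (φ : ∀ i, A i →ₗ[ℝ] A (i + ℓ)) {m k : ℤ} (h : m = k) (x : A m) :
    φ k (lcast A h x) = lcast A (show m + ℓ = k + ℓ by rw [h]) (φ m x) := by
  subst h; rfl

theorem sq_cast (A : ℤ → Type) [∀ i, AddCommGroup (A i)] [∀ i, Module ℝ (A i)]
    (d : ∀ i, A i →ₗ[ℝ] A (i + 1)) (hd : ∀ i x, d (i + 1) (d i x) = 0)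
    {i k : ℤ} (h : i + 1 = k) (x : A i) : d k (lcast A h (d i x)) = 0 := by
  subst h; exact hd i x

theorem finrank_cobound (A : ℤ → Type) [∀ i, AddCommGroup (A i)] [∀ i, Module ℝ (A i)]
    (d : ∀ i, A i →ₗ[ℝ] A (i + 1)) (k : ℤ) :
    finrank ℝ (cobound A d k) = finrank ℝ (range (d (k - 1))) := by
  unfold cobound
  rw [LinearMap.range_comp]
  exact (Submodule.equivMapOfInjective _ (lcast_inj A _) _).finrank_eq.symm

theorem finrank_Hcoh (A : ℤ → Type) [∀ i, AddCommGroup (A i)] [∀ i, Module ℝ (A i)]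
    [∀ i, FiniteDimensional ℝ (A i)]
    (d : ∀ i, A i →ₗ[ℝ] A (i + 1)) (hd : ∀ i x, d (i + 1) (d i x) = 0) (k : ℤ) :
    finrank ℝ (Hcoh A d k) + finrank ℝ (range (d (k - 1))) + finrank ℝ (range (d k))
      = finrank ℝ (A k) := by
  have hle : cobound A d k ≤ cocycles A d k := by
    rintro _ ⟨x, rfl⟩
    exact sq_cast A d hd _ x
  have h1 := Submodule.finrank_quotient_add_finrank
    (Submodule.comap (cocycles A d k).subtype (cobound A d k))
  have h2 := (Submodule.comapSubtypeEquivOfLe hle).finrank_eq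
  have h3 := LinearMap.finrank_range_add_finrank_ker (d k)
  have h4 := finrank_cobound A d k
  have h5 : finrank ℝ (cocycles A d k) = finrank ℝ (ker (d k)) := rfl
  unfold Hcoh
  omega

theorem vnum_le (A : ℤ → Type) [∀ i, AddCommGroup (A i)] [∀ i, Module ℝ (A i)]
    [∀ i, FiniteDimensional ℝ (A i)]
    (d : ∀ i, A i →ₗ[ℝ] A (i + 1)) (ℓ : ℤ) (φ : ∀ i, A i →ₗ[ℝ] A (i + ℓ)) (i : ℤ) :
    vnum A ℓ φ (i - ℓ + 1) ≤ finrank ℝ (range (coneD A d ℓ φ i)) := by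
  have h1 : finrank ℝ (Submodule.map (lcast A (show i - ℓ + 1 + ℓ = i + 1 by ring))
      (range (φ (i - ℓ + 1)))) = vnum A ℓ φ (i - ℓ + 1) :=
    (Submodule.equivMapOfInjective _ (lcast_inj A _) _).finrank_eq.symm
  have h2 : Submodule.map (lcast A (show i - ℓ + 1 + ℓ = i + 1 by ring))
      (range (φ (i - ℓ + 1))) ≤
      Submodule.map (LinearMap.fst ℝ (A (i + 1)) (A (i + 1 - ℓ + 1)))
        (range (coneD A d ℓ φ i)) := by
    rintro _ ⟨_, ⟨b, rfl⟩, rfl⟩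
    refine ⟨_, ⟨(0, b), rfl⟩, ?_⟩
    simp [coneD]
  rw [← h1]
  exact (Submodule.finrank_mono h2).trans (Submodule.finrank_map_le _ _)

theorem coneD_mk (A : ℤ → Type) [∀ i, AddCommGroup (A i)] [∀ i, Module ℝ (A i)]
    (d : ∀ i, A i →ₗ[ℝ] A (i + 1)) (ℓ : ℤ) (φ : ∀ i, A i →ₗ[ℝ] A (i + ℓ)) (i : ℤ)
    (a : A i) (b : A (i - ℓ + 1)) :
    coneD A d ℓ φ i (a, b) =
      (d i a + lcast A (show i - ℓ + 1 + ℓ = i + 1 by ring) (φ (i - ℓ + 1) b),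
      ((-1 : ℝ) ^ (ℓ - 1)) • lcast A (show i - ℓ + 1 + 1 = i + 1 - ℓ + 1 by ring)
        (d (i - ℓ + 1) b)) := rfl

theorem cone_sq (ℓ : ℤ)
    (C : ℤ → Type) [∀ i, AddCommGroup (C i)] [∀ i, Module ℝ (C i)]
    (d : ∀ i, C i →ₗ[ℝ] C (i + 1))
    (hd : ∀ i, (d (i + 1)).comp (d i) = 0)
    (φ : ∀ i, C i →ₗ[ℝ] C (i + ℓ))
    (hφ : ∀ i, (d (i + ℓ)).comp (φ i) =
      ((-1 : ℝ) ^ ℓ) • (lcast C (show i + 1 + ℓ = i + ℓ + 1 by ring)).comp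
        ((φ (i + 1)).comp (d i))) (i : ℤ) (x : C i × C (i - ℓ + 1)) :
    coneD C d ℓ φ (i + 1) (coneD C d ℓ φ i x) = 0 := by
  obtain ⟨a, b⟩ := x
  have hd' : ∀ i x, d (i + 1) (d i x) = 0 := fun i x => LinearMap.congr_fun (hd i) x
  have hφ' := LinearMap.congr_fun (hφ (i - ℓ + 1)) b
  simp only [LinearMap.comp_apply, LinearMap.smul_apply] at hφ'
  have hs : ((-1 : ℝ) ^ ℓ) = - (-1 : ℝ) ^ (ℓ - 1) := by
    rw [zpow_sub_one₀ (by norm_num)]; norm_num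
  rw [coneD_mk, coneD_mk]
  refine Prod.ext ?_ ?_
  · simp only [map_add, map_smul, hd',
      map_lcast C 1 d, map_lcast C ℓ φ, hφ', lcast_lcast, hs, Prod.fst_zero]
    module
  · simp only [map_smul, hd', map_lcast C 1 d, map_zero, smul_zero, Prod.snd_zero]

end Helpers

end ConeMorse

/-- the weak cone Morse inequality
`b^φ_k ≤ m_k − v_{k−ℓ} + m_{k−ℓ+1} − v_{k−ℓ+1}` for every integer `k ≥ 0`. -/
theorem weak_cone_morse_inequality
    (n ℓ : ℤ) (hn : 0 ≤ n) (hℓ : 1 ≤ ℓ)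
    (C : ℤ → Type) [∀ i, AddCommGroup (C i)] [∀ i, Module ℝ (C i)]
    [∀ i, FiniteDimensional ℝ (C i)]
    (hC : ∀ i, i < 0 ∨ n < i → Subsingleton (C i))
    (d : ∀ i, C i →ₗ[ℝ] C (i + 1))
    (hd : ∀ i, (d (i + 1)).comp (d i) = 0)
    (φ : ∀ i, C i →ₗ[ℝ] C (i + ℓ))
    (hφ : ∀ i, (d (i + ℓ)).comp (φ i) =
      ((-1 : ℝ) ^ ℓ) • (lcast C (show i + 1 + ℓ = i + ℓ + 1 by ring)).comp
        ((φ (i + 1)).comp (d i))) :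
    ∀ k : ℤ, 0 ≤ k →
      (bphi C d ℓ φ k : ℤ) ≤
        (mnum C k : ℤ) - vnum C ℓ φ (k - ℓ) + mnum C (k - ℓ + 1) - vnum C ℓ φ (k - ℓ + 1) := by
  intro k _
  have h1 := finrank_Hcoh (fun i => C i × C (i - ℓ + 1)) (coneD C d ℓ φ)
    (cone_sq ℓ C d hd φ hφ) k
  have h2 := vnum_le C d ℓ φ k
  have h3 := vnum_le C d ℓ φ (k - 1)
  have h7 : vnum C ℓ φ (k - 1 - ℓ + 1) = vnum C ℓ φ (k - ℓ) :=
    congrArg (vnum C ℓ φ) (by ring)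
  have h4 : finrank ℝ (C k × C (k - ℓ + 1)) = mnum C k + mnum C (k - ℓ + 1) :=
    Module.finrank_prod
  have h5 : bphi C d ℓ φ k =
    finrank ℝ (Hcoh (fun i => C i × C (i - ℓ + 1)) (coneD C d ℓ φ) k) := rfl
  rw [← h5] at h1
  have h6 := h1.trans h4
  omega
end
end

section
/- Suppose ℓ = 2 and the induced map [φ] : H^k(C) → H^{k+2}(C) is zero for every k (the algebraic model of c(ψ) for a d-exact two-form ψ). Then for every integer k ≥ 1, b_k ≤ m_k − v_{k−1}. -/
open LinearMap Module

noncomputable section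

open ConeMorse

theorem aux_cast_range (A : ℤ → Type) [∀ i, AddCommGroup (A i)] [∀ i, Module ℝ (A i)]
    {V : Type} [AddCommGroup V] [Module ℝ V] {m k : ℤ} (h : m = k) (f : V →ₗ[ℝ] A m) :
    finrank ℝ (range ((lcast A h).comp f)) = finrank ℝ (range f) := by
  subst h
  have : (lcast A rfl).comp f = f := by ext x; rfl
  rw [this]

theorem aux_cobound (A : ℤ → Type) [∀ i, AddCommGroup (A i)] [∀ i, Module ℝ (A i)]
    (d : ∀ i, A i →ₗ[ℝ] A (i + 1)) (i j : ℤ) (h : j = i - 1) :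
    finrank ℝ (cobound A d i) = finrank ℝ (range (d j)) := by
  subst h
  exact aux_cast_range A _ _

theorem aux_rank {V W U : Type} [AddCommGroup V] [Module ℝ V] [FiniteDimensional ℝ V]
    [AddCommGroup W] [Module ℝ W] [AddCommGroup U] [Module ℝ U]
    (f : V →ₗ[ℝ] W) (g : V →ₗ[ℝ] U) :
    finrank ℝ (range f) ≤ finrank ℝ (Submodule.map f (ker g)) + finrank ℝ (range g) := by
  have h1 := finrank_range_add_finrank_ker f
  have h2 := finrank_range_add_finrank_ker g
  have h3 := finrank_range_add_finrank_ker (f.domRestrict (ker g))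
  have h4 : range (f.domRestrict (ker g)) = Submodule.map f (ker g) := by
    rw [LinearMap.range_domRestrict]
  rw [h4] at h3
  have h5 : finrank ℝ (ker (f.domRestrict (ker g))) ≤ finrank ℝ (ker f) := by
    rw [← Submodule.finrank_map_subtype_eq]
    apply Submodule.finrank_mono
    rintro _ ⟨x, hx, rfl⟩
    exact hx
  omega

theorem aux_cobound_le (A : ℤ → Type) [∀ i, AddCommGroup (A i)] [∀ i, Module ℝ (A i)]
    (d : ∀ i, A i →ₗ[ℝ] A (i + 1)) (hd : ∀ i, (d (i + 1)).comp (d i) = 0) (i : ℤ) :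
    cobound A d i ≤ cocycles A d i := by
  obtain ⟨j, rfl⟩ : ∃ j, i = j + 1 := ⟨i - 1, by ring⟩
  have key : ∀ (m : ℤ) (h : m + 1 = j + 1),
      range ((lcast A h).comp (d m)) ≤ ker (d (j + 1)) := by
    intro m h
    obtain rfl : m = j := by omega
    rintro _ ⟨x, rfl⟩
    exact LinearMap.congr_fun (hd m) x
  exact key _ _

/-- if `ℓ = 2` and the induced map `[φ] : H^k(C) → H^{k+2}(C)` is zero for
every `k` (the algebraic model of `c(ψ)` for a d-exact two-form `ψ`), then for every
integer `k ≥ 1`, `b_k ≤ m_k − v_{k−1}`. -/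
theorem betti_bound_exact_two_form
    (n ℓ : ℤ) (hn : 0 ≤ n) (hℓ : 1 ≤ ℓ)
    (C : ℤ → Type) [∀ i, AddCommGroup (C i)] [∀ i, Module ℝ (C i)]
    [∀ i, FiniteDimensional ℝ (C i)]
    (hC : ∀ i, i < 0 ∨ n < i → Subsingleton (C i))
    (d : ∀ i, C i →ₗ[ℝ] C (i + 1))
    (hd : ∀ i, (d (i + 1)).comp (d i) = 0)
    (φ : ∀ i, C i →ₗ[ℝ] C (i + ℓ))
    (hφ : ∀ i, (d (i + ℓ)).comp (φ i) =
      ((-1 : ℝ) ^ ℓ) • (lcast C (show i + 1 + ℓ = i + ℓ + 1 by ring)).comp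
        ((φ (i + 1)).comp (d i)))
    (hl2 : ℓ = 2)
    (hzero : ∀ k : ℤ, Submodule.map (φ k) (cocycles C d k) ≤ cobound C d (k + ℓ)) :
    ∀ k : ℤ, 1 ≤ k →
      (bnum C d k : ℤ) ≤ (mnum C k : ℤ) - vnum C ℓ φ (k - 1) := by
  subst hl2
  intro k _
  have h1 := aux_rank (φ (k - 1)) (d (k - 1))
  have h2 := Submodule.finrank_mono (hzero (k - 1))
  rw [aux_cobound C d (k - 1 + 2) k (by ring)] at h2
  have h3 := finrank_range_add_finrank_ker (d k)
  have h4 := Submodule.finrank_quotient_add_finrank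
    (Submodule.comap (cocycles C d k).subtype (cobound C d k))
  have h5 : finrank ℝ (Submodule.comap (cocycles C d k).subtype (cobound C d k)) =
      finrank ℝ (cobound C d k) :=
    (Submodule.comapSubtypeEquivOfLe (aux_cobound_le C d hd k)).finrank_eq
  rw [h5, aux_cobound C d k (k - 1) rfl] at h4
  unfold bnum mnum vnum Hcoh
  change _ ≤ finrank ℝ (Submodule.map (φ (k - 1)) (cocycles C d (k - 1))) + _ at h1
  change _ + finrank ℝ (cocycles C d k) = _ at h3
  omega
end
end

section
/- For every integer j ≥ 0: Σ_{k=0}^{j} (−1)^{j−k} ((v_{k−ℓ} − r_{k−ℓ}) + (v_{k−ℓ+1} − r_{k−ℓ+1})) ≤ Σ_{k=0}^{j} (−1)^{j−k} ((m_k − b_k) + (m_{k−ℓ+1} − b_{k−ℓ+1})). -/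
open LinearMap Module

noncomputable section

open ConeMorse

namespace RankAux

lemma finrank_sub_quot {V : Type} [AddCommGroup V] [Module ℝ V] [FiniteDimensional ℝ V]
    (P Q : Submodule ℝ V) :
    finrank ℝ (P ⧸ Submodule.comap P.subtype Q) + finrank ℝ (P ⊓ Q : Submodule ℝ V)
      = finrank ℝ P := by
  rw [← Submodule.finrank_quotient_add_finrank (Submodule.comap P.subtype Q),
    ← Submodule.map_comap_subtype, Submodule.finrank_map_subtype_eq]

lemma lcast_inj (A : ℤ → Type) [∀ i, AddCommGroup (A i)] [∀ i, Module ℝ (A i)]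
    {m k : ℤ} (h : m = k) : Function.Injective (lcast A h) := by
  subst h
  exact fun x y hxy => hxy

variable (A : ℤ → Type) [∀ i, AddCommGroup (A i)] [∀ i, Module ℝ (A i)]
  [∀ i, FiniteDimensional ℝ (A i)] (d : ∀ i, A i →ₗ[ℝ] A (i + 1))

def rk (k : ℤ) : ℕ := finrank ℝ (range (d k))

lemma finrank_cobound (k : ℤ) : finrank ℝ (cobound A d k) = rk A d (k - 1) := by
  unfold cobound rk
  rw [LinearMap.range_comp]
  exact (Submodule.equivMapOfInjective _ (lcast_inj A _) _).finrank_eq.symm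

lemma cobound_le (hd : ∀ i, (d (i + 1)).comp (d i) = 0) (k : ℤ) :
    cobound A d k ≤ cocycles A d k := by
  obtain ⟨i, rfl⟩ : ∃ i, k = i + 1 := ⟨k - 1, by ring⟩
  have key : ∀ (m : ℤ) (e : m = i) (h : m + 1 = i + 1) (x : A m),
      d (i + 1) (lcast A h (d m x)) = 0 := by
    intro m e h x
    subst e
    exact LinearMap.congr_fun (hd m) x
  rintro _ ⟨x, rfl⟩
  exact key _ (by ring) _ x

lemma m_sub_b (hd : ∀ i, (d (i + 1)).comp (d i) = 0) (k : ℤ) :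
    (mnum A k : ℤ) - bnum A d k = rk A d k + rk A d (k - 1) := by
  have h1 := finrank_sub_quot (cocycles A d k) (cobound A d k)
  rw [inf_eq_right.2 (cobound_le A d hd k), finrank_cobound] at h1
  have h2 := LinearMap.finrank_range_add_finrank_ker (d k)
  unfold mnum bnum
  unfold rk at *
  unfold Hcoh
  change _ = finrank ℝ (ker (d k)) at h1
  omega

lemma v_sub_r (ℓ : ℤ) (φ : ∀ i, A i →ₗ[ℝ] A (i + ℓ)) (k : ℤ) :
    (vnum A ℓ φ k : ℤ) - rnum A d ℓ φ k ≤ rk A d k + rk A d (k + ℓ - 1) := by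
  have h1 := finrank_sub_quot (Submodule.map (φ k) (cocycles A d k)) (cobound A d (k + ℓ))
  have h2 : finrank ℝ (Submodule.map (φ k) (cocycles A d k) ⊓ cobound A d (k + ℓ) :
      Submodule ℝ _) ≤ finrank ℝ (cobound A d (k + ℓ)) :=
    Submodule.finrank_mono inf_le_right
  rw [finrank_cobound] at h2
  have h3 := LinearMap.finrank_range_add_finrank_ker (d k)
  have h4 := LinearMap.finrank_range_add_finrank_ker (φ k)
  have h5 := LinearMap.finrank_range_add_finrank_ker ((φ k).domRestrict (cocycles A d k))
  rw [LinearMap.range_domRestrict] at h5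
  have h6 : finrank ℝ (ker ((φ k).domRestrict (cocycles A d k))) ≤ finrank ℝ (ker (φ k)) := by
    rw [LinearMap.ker_domRestrict, ← Submodule.finrank_map_subtype_eq]
    refine Submodule.finrank_mono ?_
    rintro _ ⟨x, hx, rfl⟩
    exact hx
  change _ + finrank ℝ (cocycles A d k) = _ at h3
  unfold vnum rnum
  unfold rk at *
  omega

lemma telescope (f : ℤ → ℤ) (j : ℕ) :
    ∑ k ∈ Finset.range (j + 1), (-1 : ℤ) ^ (j - k) * (f (k : ℤ) + f ((k : ℤ) + 1))
      = f ((j : ℤ) + 1) + (-1) ^ j * f 0 := by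
  induction j with
  | zero => simp; ring
  | succ j ih =>
    rw [Finset.sum_range_succ]
    have : ∀ k ∈ Finset.range (j + 1),
        (-1 : ℤ) ^ (j + 1 - k) * (f (k : ℤ) + f ((k : ℤ) + 1)) =
        (-1) * ((-1 : ℤ) ^ (j - k) * (f (k : ℤ) + f ((k : ℤ) + 1))) := by
      intro k hk
      have hk' : j + 1 - k = (j - k) + 1 := by
        have := Finset.mem_range.1 hk
        omega
      rw [hk', pow_succ]; ring
    rw [Finset.sum_congr rfl this, ← Finset.mul_sum, ih]
    push_cast
    simp
    ring

end RankAux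

/-- STATEMENT 13: for every integer `j ≥ 0`,
`Σ_{k=0}^{j} (−1)^{j−k} ((v_{k−ℓ} − r_{k−ℓ}) + (v_{k−ℓ+1} − r_{k−ℓ+1}))
  ≤ Σ_{k=0}^{j} (−1)^{j−k} ((m_k − b_k) + (m_{k−ℓ+1} − b_{k−ℓ+1}))`. -/
theorem strong_rank_deviation_bound
    (n ℓ : ℤ) (hn : 0 ≤ n) (hℓ : 1 ≤ ℓ)
    (C : ℤ → Type) [∀ i, AddCommGroup (C i)] [∀ i, Module ℝ (C i)]
    [∀ i, FiniteDimensional ℝ (C i)]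
    (hC : ∀ i, i < 0 ∨ n < i → Subsingleton (C i))
    (d : ∀ i, C i →ₗ[ℝ] C (i + 1))
    (hd : ∀ i, (d (i + 1)).comp (d i) = 0)
    (φ : ∀ i, C i →ₗ[ℝ] C (i + ℓ))
    (hφ : ∀ i, (d (i + ℓ)).comp (φ i) =
      ((-1 : ℝ) ^ ℓ) • (lcast C (show i + 1 + ℓ = i + ℓ + 1 by ring)).comp
        ((φ (i + 1)).comp (d i))) :
    ∀ j : ℕ,
      ∑ k ∈ Finset.range (j + 1), (-1 : ℤ) ^ (j - k) *
          (((vnum C ℓ φ ((k : ℤ) - ℓ) : ℤ) - rnum C d ℓ φ ((k : ℤ) - ℓ)) +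
            ((vnum C ℓ φ ((k : ℤ) - ℓ + 1) : ℤ) - rnum C d ℓ φ ((k : ℤ) - ℓ + 1))) ≤
        ∑ k ∈ Finset.range (j + 1), (-1 : ℤ) ^ (j - k) *
          (((mnum C (k : ℤ) : ℤ) - bnum C d (k : ℤ)) +
            ((mnum C ((k : ℤ) - ℓ + 1) : ℤ) - bnum C d ((k : ℤ) - ℓ + 1))) := by
  intro j
  have hm : ∀ k : ℤ, ((mnum C k : ℤ) - bnum C d k) + ((mnum C (k - ℓ + 1) : ℤ) - bnum C d (k - ℓ + 1))
      = ((RankAux.rk C d (k - 1) : ℤ) + RankAux.rk C d (k - ℓ)) +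
        ((RankAux.rk C d (k + 1 - 1) : ℤ) + RankAux.rk C d (k + 1 - ℓ)) := by
    intro k
    rw [RankAux.m_sub_b C d hd, RankAux.m_sub_b C d hd,
      show k - ℓ + 1 - 1 = k - ℓ by ring, show k + 1 - 1 = k by ring,
      show k - ℓ + 1 = k + 1 - ℓ by ring]
    ring
  have hr : ∀ k : ℤ, k < 0 → RankAux.rk C d k = 0 := by
    intro k hk
    have := hC k (Or.inl hk)
    have h := LinearMap.finrank_range_le (d k)
    rw [finrank_zero_of_subsingleton (M := C k)] at h
    unfold RankAux.rk
    omega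
  have hv : vnum C ℓ φ (0 - ℓ) = 0 := by
    have := hC (0 - ℓ) (Or.inl (by omega))
    have h := LinearMap.finrank_range_le (φ (0 - ℓ))
    rw [finrank_zero_of_subsingleton (M := C (0 - ℓ))] at h
    unfold vnum
    omega
  have hrn : rnum C d ℓ φ (0 - ℓ) = 0 := by
    have h := RankAux.finrank_sub_quot (Submodule.map (φ (0 - ℓ)) (cocycles C d (0 - ℓ)))
      (cobound C d (0 - ℓ + ℓ))
    have h2 : finrank ℝ (Submodule.map (φ (0 - ℓ)) (cocycles C d (0 - ℓ))) ≤
        finrank ℝ (range (φ (0 - ℓ))) := Submodule.finrank_mono LinearMap.map_le_range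
    unfold vnum at hv
    unfold rnum
    omega
  have hL := RankAux.telescope
    (fun k => (vnum C ℓ φ (k - ℓ) : ℤ) - rnum C d ℓ φ (k - ℓ)) j
  have hR := RankAux.telescope
    (fun k => (RankAux.rk C d (k - 1) : ℤ) + RankAux.rk C d (k - ℓ)) j
  simp only [hv, hrn, hr (0 - 1) (by omega), hr (0 - ℓ) (by omega)] at hL hR
  have e : ∀ k : ℤ, k - ℓ + 1 = k + 1 - ℓ := fun k => by ring
  simp only [hm]
  rw [hR]
  simp only [e]
  rw [hL]
  have := RankAux.v_sub_r C d ℓ φ ((j : ℤ) + 1 - ℓ)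
  rw [show (j : ℤ) + 1 - ℓ + ℓ - 1 = (j : ℤ) + 1 - 1 by ring] at this
  simp only [Nat.cast_zero, sub_zero, add_zero, mul_zero]
  omega
end
end

section
/- Suppose ℓ = 2 (the algebraic model of c(ψ) for a d-closed two-form ψ). Then for every integer k ≥ 0: 0 ≤ v_k − r_k ≤ m_{k+1} − b_{k+1}. -/
open LinearMap Module

noncomputable section

open ConeMorse

theorem cobound_eq_aux (A : ℤ → Type) [∀ i, AddCommGroup (A i)] [∀ i, Module ℝ (A i)]
    (d : ∀ i, A i →ₗ[ℝ] A (i + 1)) (j : ℤ) :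
    cobound A d (j + 1) = range (d j) := by
  have key : ∀ (i j' : ℤ) (h : j' + 1 = i) (h2 : i = j + 1) (_ : j' = j),
      range ((lcast A (h.trans h2)).comp (d j')) = range (d j) := by
    intro i j' h h2 h3
    subst h3
    rfl
  exact key (j + 1) (j + 1 - 1) (by ring) rfl (by ring)

theorem finrank_range_eq_aux (A : ℤ → Type) [∀ i, AddCommGroup (A i)] [∀ i, Module ℝ (A i)]
    (d : ∀ i, A i →ₗ[ℝ] A (i + 1)) {i j : ℤ} (h : j + 1 = i) :
    finrank ℝ (cobound A d i) = finrank ℝ (range (d j)) := by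
  subst h
  rw [cobound_eq_aux]

theorem finrank_comap_aux {V : Type} [AddCommGroup V] [Module ℝ V] (p q : Submodule ℝ V) :
    finrank ℝ (Submodule.comap p.subtype q) = finrank ℝ (p ⊓ q : Submodule ℝ V) := by
  rw [← Submodule.map_comap_subtype]
  exact (LinearEquiv.finrank_eq (Submodule.equivMapOfInjective _ p.injective_subtype _))

theorem finrank_map_aux {V W : Type} [AddCommGroup V] [Module ℝ V] [AddCommGroup W] [Module ℝ W]
    [FiniteDimensional ℝ V] [FiniteDimensional ℝ W]
    (f : V →ₗ[ℝ] W) (p : Submodule ℝ V) :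
    finrank ℝ (range f) + finrank ℝ p ≤ finrank ℝ (p.map f) + finrank ℝ V := by
  have h1 := finrank_range_add_finrank_ker f
  have h2 := finrank_range_add_finrank_ker (f.domRestrict p)
  rw [LinearMap.range_domRestrict] at h2
  have h3 : finrank ℝ (ker (f.domRestrict p)) ≤ finrank ℝ (ker f) := by
    rw [LinearMap.ker_domRestrict, finrank_comap_aux]
    exact Submodule.finrank_mono inf_le_right
  omega

/-- STATEMENT 14: if `ℓ = 2`, then for every integer `k ≥ 0`,
`0 ≤ v_k − r_k ≤ m_{k+1} − b_{k+1}`. -/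
theorem rank_deviation_bound_two_form
    (n ℓ : ℤ) (hn : 0 ≤ n) (hℓ : 1 ≤ ℓ)
    (C : ℤ → Type) [∀ i, AddCommGroup (C i)] [∀ i, Module ℝ (C i)]
    [∀ i, FiniteDimensional ℝ (C i)]
    (hC : ∀ i, i < 0 ∨ n < i → Subsingleton (C i))
    (d : ∀ i, C i →ₗ[ℝ] C (i + 1))
    (hd : ∀ i, (d (i + 1)).comp (d i) = 0)
    (φ : ∀ i, C i →ₗ[ℝ] C (i + ℓ))
    (hφ : ∀ i, (d (i + ℓ)).comp (φ i) =
      ((-1 : ℝ) ^ ℓ) • (lcast C (show i + 1 + ℓ = i + ℓ + 1 by ring)).comp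
        ((φ (i + 1)).comp (d i)))
    (hl2 : ℓ = 2) :
    ∀ k : ℤ, 0 ≤ k →
      0 ≤ (vnum C ℓ φ k : ℤ) - rnum C d ℓ φ k ∧
        (vnum C ℓ φ k : ℤ) - rnum C d ℓ φ k ≤ (mnum C (k + 1) : ℤ) - bnum C d (k + 1) := by
  intro k _
  subst hl2
  have e1 := Submodule.finrank_quotient_add_finrank
    (Submodule.comap (Submodule.map (φ k) (cocycles C d k)).subtype (cobound C d (k + 2)))
  have e2 := Submodule.finrank_quotient_add_finrank
    (Submodule.comap (cocycles C d (k + 1)).subtype (cobound C d (k + 1)))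
  have e3 := finrank_map_aux (φ k) (cocycles C d k)
  have e4 := finrank_range_add_finrank_ker (d k)
  have e5 := finrank_range_add_finrank_ker (d (k + 1))
  have e6 := finrank_range_eq_aux C d (show k + 1 + 1 = k + 2 by ring)
  have e7 := finrank_range_eq_aux C d (show k + 1 = k + 1 from rfl)
  rw [finrank_comap_aux] at e1 e2
  have e8 : finrank ℝ (Submodule.map (φ k) (cocycles C d k) ⊓ cobound C d (k + 2) :
      Submodule ℝ (C (k + 2))) ≤ finrank ℝ (cobound C d (k + 2)) :=
    Submodule.finrank_mono inf_le_right
  have e9 : cocycles C d (k + 1) ⊓ cobound C d (k + 1) = cobound C d (k + 1) := by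
    rw [inf_eq_right, cobound_eq_aux]
    exact LinearMap.range_le_ker_iff.mpr (hd k)
  rw [e9] at e2
  have e10 : finrank ℝ (Submodule.map (φ k) (cocycles C d k)) ≤ finrank ℝ (range (φ k)) :=
    Submodule.finrank_mono LinearMap.map_le_range
  unfold vnum rnum mnum bnum Hcoh
  change _ = finrank ℝ (ker (d (k + 1))) at e2
  change _ + finrank ℝ (ker (d k)) ≤ _ at e3
  omega
end
end
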